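/- In the nonlinear setting with standing conditions (N1)–(N5): limsup_{n→∞} sup{ m_n([b_{l+q}, b_l])/(b_l − b_{l+q})^{h_n} : l ≥ 0, q ≥ 1 } ≤ 1. -/

import Mathlib

open Set Filter MeasureTheory Topology

noncomputable section

/-- Composition `g_{i₁} ∘ g_{i₂} ∘ ⋯ ∘ g_{i_l}` along a finite word. -/
def wordComp (g : ℕ → ℝ → ℝ) : List ℕ → ℝ → ℝ
  | [] => id
  | k :: w => g k ∘ wordComp g w

/-- The limit set `J_n` of the IFS `S_n = {g_1, …, g_n}`. -/
def limitSet (g : ℕ → ℝ → ℝ) (n : ℕ) : Set ℝ :=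
  ⋂ l : ℕ, ⋃ w ∈ {w : List ℕ | w.length = l + 1 ∧ ∀ i ∈ w, 1 ≤ i ∧ i ≤ n},
    wordComp g w '' Set.Icc (0 : ℝ) 1

/-- The distortion `κ(g) = sup_{x,y ∈ [0,1]} |g′(y)|/|g′(x)|` of a map with derivative `f'`. -/
def distortion (f' : ℝ → ℝ) : ℝ :=
  ⨆ x ∈ Set.Icc (0 : ℝ) 1, ⨆ y ∈ Set.Icc (0 : ℝ) 1, |f' y| / |f' x|

/-- The nonlinear setting of the paper: a strictly decreasing sequence `b_k → 0` with `b_0 = 1`,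
    decreasing `C²` diffeomorphisms `g_k : [0,1] → [b_k, b_{k-1}]` (with first and second
    derivatives `g'` and `g''`), the Hausdorff dimensions `h_n` of the limit sets `J_n`, and
    the standing conditions (N1)–(N5). -/
structure NonlinearIFS where
  b : ℕ → ℝ
  g : ℕ → ℝ → ℝ
  g' : ℕ → ℝ → ℝ
  g'' : ℕ → ℝ → ℝ
  h : ℕ → ℝ
  b_zero : b 0 = 1
  b_anti : StrictAnti b
  b_lim : Filter.Tendsto b Filter.atTop (nhds 0)
  g_image : ∀ k, 1 ≤ k → g k '' Set.Icc (0 : ℝ) 1 = Set.Icc (b k) (b (k - 1))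
  g_anti : ∀ k, 1 ≤ k → StrictAntiOn (g k) (Set.Icc (0 : ℝ) 1)
  g_zero : ∀ k, 1 ≤ k → g k 0 = b (k - 1)
  g_one : ∀ k, 1 ≤ k → g k 1 = b k
  deriv1 : ∀ k, 1 ≤ k → ∀ x ∈ Set.Icc (0 : ℝ) 1, HasDerivAt (g k) (g' k x) x
  deriv2 : ∀ k, 1 ≤ k → ∀ x ∈ Set.Icc (0 : ℝ) 1, HasDerivAt (g' k) (g'' k x) x
  deriv_ne : ∀ k, 1 ≤ k → ∀ x ∈ Set.Icc (0 : ℝ) 1, g' k x ≠ 0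
  h_dim : ∀ n, 1 ≤ n → dimH (limitSet g n) = ENNReal.ofReal (h n)
  N1 : Filter.Tendsto (fun n : ℕ => (1 - h n) * Real.log n) Filter.atTop (nhds 0)
  N2 : Filter.Tendsto (fun n : ℕ => ⨆ k ∈ Set.Ici n, b k / b (k + 1)) Filter.atTop (nhds 1)
  N3 : ∃ c : ℝ, 0 < c ∧ ∀ n, 1 ≤ n → ∀ x ∈ Set.Icc (0 : ℝ) 1, |g'' n x / g' n x| < c
  N4 : Filter.Tendsto (fun n : ℕ => distortion (g' n)) Filter.atTop (nhds 1)
  N5 : ∃ α : ℝ, α < 1 ∧ ∀ n, 1 ≤ n → ∀ x ∈ Set.Icc (0 : ℝ) 1, |g' n x| < α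

/-- The normalized Hausdorff measure `m_n(A) = H_{h_n}(A ∩ J_n)/H_{h_n}(J_n)`. -/
def normMeas (S : NonlinearIFS) (n : ℕ) (A : Set ℝ) : ENNReal :=
  μH[S.h n] (A ∩ limitSet S.g n) / μH[S.h n] (limitSet S.g n)

/-!
Let `L_h f (x) = ∑_{k ≤ n} |g_k'(x)|^h f (g_k x)`. Change of variables bounds `∫ f dH_h` over `J_n`
by `∫ L_h f dH_h`, while `∫ L_1 f dx ≤ ∫ f dx` for Lebesgue measure. Bounded distortion and
contraction make `L_1` map the cone of log-`C`-Lipschitz densities strictly into itself, so from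
`L_1 f` a fixed proportion of its mean can be split off without leaving the cone. Since `L_h`
exceeds `L_1` by `O(n^(1-h) - 1) + O(1 - h)`, which (N1) sends to `0`, iterating gives
`∫ f dm_n ≤ (1 + o(1)) ∫ f dx` uniformly on the cone. Applied to `f = |g_k'|^h`, together with
Jensen's inequality, this yields `m_n(g_k J_n) ≤ (1 + o(1)) (b_{k-1} - b_k)^h`, and summing over the
branches inside `[b_{l+q}, b_l]` costs, by concavity, one more factor `n^(1-h) → 1`.
-/

open scoped NNReal ENNReal

local notation "𝕀" => Set.Icc (0 : ℝ) 1

section RealInequalities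

lemma sum_rpow_le_card_rpow_mul_rpow_sum {ι : Type*} (s : Finset ι) {a : ι → ℝ} {h : ℝ}
    (ha : ∀ i ∈ s, 0 ≤ a i) (h0 : 0 ≤ h) (h1 : h ≤ 1) :
    ∑ i ∈ s, a i ^ h ≤ (s.card : ℝ) ^ (1 - h) * (∑ i ∈ s, a i) ^ h := by
  rcases s.eq_empty_or_nonempty with rfl | hs
  · simp only [Finset.sum_empty]
    positivity
  have hcard : (0 : ℝ) < s.card := by exact_mod_cast hs.card_pos
  have jensen := (Real.concaveOn_rpow h0 h1).le_map_sum (t := s) (w := fun _ => (s.card : ℝ)⁻¹)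
    (p := a) (fun _ _ => by positivity) (by simp [hcard.ne']) ha
  simp only [smul_eq_mul, ← Finset.mul_sum] at jensen
  rw [Real.mul_rpow (by positivity) (Finset.sum_nonneg ha), Real.inv_rpow hcard.le,
    inv_mul_le_iff₀ hcard] at jensen
  rwa [Real.rpow_sub hcard, Real.rpow_one, div_eq_mul_inv, mul_assoc]

lemma rpow_le_add_one_sub {t h : ℝ} (ht : 0 ≤ t) (h0 : 0 ≤ h) (h1 : h ≤ 1) :
    t ^ h ≤ t + (1 - h) := by
  have bernoulli := rpow_one_add_le_one_add_mul_self (s := t - 1) (by linarith) h0 h1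
  rw [add_sub_cancel] at bernoulli
  nlinarith

lemma sum_sub_pred_Ioc (b : ℕ → ℝ) {l m : ℕ} (hlm : l ≤ m) :
    ∑ k ∈ Finset.Ioc l m, (b (k - 1) - b k) = b l - b m := by
  induction m, hlm using Nat.le_induction with
  | base => simp
  | succ m hm ih =>
    rw [← Finset.insert_Ioc_right_eq_Ioc_add_one hm, Finset.sum_insert (by simp), ih]
    simp

end RealInequalities

section LogLipschitz

variable {X Y : Type*} [PseudoMetricSpace X] [PseudoMetricSpace Y]

/-- Nonnegative functions on `s` whose logarithm is `C`-Lipschitz (with the zero function allowed):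
the cone of densities on which the transfer operator contracts. -/
structure LogLipschitzOn (C : ℝ) (f : X → ℝ) (s : Set X) : Prop where
  nonneg : ∀ x ∈ s, 0 ≤ f x
  le_mul_exp : ∀ x ∈ s, ∀ y ∈ s, f x ≤ f y * Real.exp (C * dist x y)

namespace LogLipschitzOn

variable {C D : ℝ} {f g : X → ℝ} {s t : Set X}

lemma const {a : ℝ} (ha : 0 ≤ a) (s : Set X) : LogLipschitzOn 0 (fun _ => a) s :=
  ⟨fun _ _ => ha, fun _ _ _ _ => by simp⟩

lemma mono (hf : LogLipschitzOn C f s) (hCD : C ≤ D) : LogLipschitzOn D f s := by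
  refine ⟨hf.nonneg, fun x hx y hy => (hf.le_mul_exp x hx y hy).trans ?_⟩
  have := hf.nonneg y hy
  gcongr

lemma mono_set (hf : LogLipschitzOn C f t) (hst : s ⊆ t) : LogLipschitzOn C f s :=
  ⟨fun x hx => hf.nonneg x (hst hx), fun x hx y hy => hf.le_mul_exp x (hst hx) y (hst hy)⟩

lemma mul (hf : LogLipschitzOn C f s) (hg : LogLipschitzOn D g s) :
    LogLipschitzOn (C + D) (fun x => f x * g x) s := by
  refine ⟨fun x hx => mul_nonneg (hf.nonneg x hx) (hg.nonneg x hx), fun x hx y hy => ?_⟩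
  calc f x * g x ≤ f y * Real.exp (C * dist x y) * (g y * Real.exp (D * dist x y)) :=
        mul_le_mul (hf.le_mul_exp x hx y hy) (hg.le_mul_exp x hx y hy) (hg.nonneg x hx)
          (mul_nonneg (hf.nonneg y hy) (Real.exp_pos _).le)
    _ = f y * g y * Real.exp ((C + D) * dist x y) := by
        rw [add_mul, Real.exp_add]
        ring

lemma rpow (hf : LogLipschitzOn C f s) {h : ℝ} (h0 : 0 ≤ h) :
    LogLipschitzOn (h * C) (fun x => f x ^ h) s := by
  refine ⟨fun x hx => Real.rpow_nonneg (hf.nonneg x hx) h, fun x hx y hy => ?_⟩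
  calc f x ^ h ≤ (f y * Real.exp (C * dist x y)) ^ h :=
        Real.rpow_le_rpow (hf.nonneg x hx) (hf.le_mul_exp x hx y hy) h0
    _ = f y ^ h * Real.exp (h * C * dist x y) := by
        rw [Real.mul_rpow (hf.nonneg y hy) (Real.exp_pos _).le, ← Real.exp_mul]
        ring_nf

lemma sum {ι : Type*} {T : Finset ι} {F : ι → X → ℝ}
    (hF : ∀ i ∈ T, LogLipschitzOn C (F i) s) :
    LogLipschitzOn C (fun x => ∑ i ∈ T, F i x) s := by
  refine ⟨fun x hx => Finset.sum_nonneg fun i hi => (hF i hi).nonneg x hx, fun x hx y hy => ?_⟩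
  rw [Finset.sum_mul]
  exact Finset.sum_le_sum fun i hi => (hF i hi).le_mul_exp x hx y hy

lemma comp {φ : Y → X} {u : Set Y} {K : ℝ≥0} (hf : LogLipschitzOn C f s) (hC : 0 ≤ C)
    (hφ : LipschitzOnWith K φ u) (hmaps : MapsTo φ u s) :
    LogLipschitzOn (C * K) (fun y => f (φ y)) u := by
  refine ⟨fun y hy => hf.nonneg _ (hmaps hy), fun x hx y hy =>
    (hf.le_mul_exp _ (hmaps hx) _ (hmaps hy)).trans ?_⟩
  have := hf.nonneg _ (hmaps hy)
  rw [mul_assoc]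
  gcongr
  exact hφ.dist_le_mul x hx y hy

lemma le_mul_exp_of_dist_le (hf : LogLipschitzOn C f s) (hC : 0 ≤ C) {x y : X} {δ : ℝ}
    (hx : x ∈ s) (hy : y ∈ s) (hxy : dist x y ≤ δ) : f x ≤ f y * Real.exp (C * δ) := by
  refine (hf.le_mul_exp x hx y hy).trans ?_
  have := hf.nonneg y hy
  gcongr

lemma continuousOn (hf : LogLipschitzOn C f s) : ContinuousOn f s := by
  intro x hx
  have upper : Tendsto (fun y => f x * Real.exp (C * dist y x)) (𝓝[s] x) (𝓝 (f x)) := by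
    have : Continuous fun y => f x * Real.exp (C * dist y x) := by fun_prop
    simpa using this.continuousWithinAt.tendsto (x := x) (s := s)
  have lower : Tendsto (fun y => f x * Real.exp (-(C * dist x y))) (𝓝[s] x) (𝓝 (f x)) := by
    have : Continuous fun y => f x * Real.exp (-(C * dist x y)) := by fun_prop
    simpa using this.continuousWithinAt.tendsto (x := x) (s := s)
  refine tendsto_of_tendsto_of_tendsto_of_le_of_le' lower upper ?_ ?_ <;>
    filter_upwards [self_mem_nhdsWithin] with y hy
  · rw [Real.exp_neg, ← div_eq_mul_inv, div_le_iff₀ (Real.exp_pos _)]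
    exact hf.le_mul_exp x hx y hy
  · exact hf.le_mul_exp y hy x hx

-- By convexity of `exp`, `e^{Dr} ≤ (1 - a) e^{Cr} + a`; the removed constant absorbs the term `a`.
lemma sub_const {a τ : ℝ} (hf : LogLipschitzOn D f s) (hC : 0 ≤ C) (ha0 : 0 ≤ a) (ha1 : a ≤ 1)
    (hDC : D ≤ (1 - a) * C) (hτ : ∀ x ∈ s, τ ≤ a * f x) :
    LogLipschitzOn C (fun x => f x - τ) s := by
  refine ⟨fun x hx => ?_, fun x hx y hy => ?_⟩
  · nlinarith [hτ x hx, hf.nonneg x hx]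
  set E := Real.exp (C * dist x y)
  have one_le_E : 1 ≤ E := Real.one_le_exp (by positivity)
  have exp_convex : Real.exp ((1 - a) * (C * dist x y)) ≤ (1 - a) * E + a := by
    simpa using convexOn_exp.2 (mem_univ (C * dist x y)) (mem_univ 0) (sub_nonneg.2 ha1) ha0
      (sub_add_cancel 1 a)
  have fx_le : f x ≤ f y * ((1 - a) * E + a) :=
    calc f x ≤ f y * Real.exp ((1 - a) * C * dist x y) := (hf.mono hDC).le_mul_exp x hx y hy
      _ ≤ f y * ((1 - a) * E + a) := by
        rw [mul_assoc]
        exact mul_le_mul_of_nonneg_left exp_convex (hf.nonneg y hy)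
  nlinarith [mul_le_mul_of_nonneg_right (hτ y hy) (sub_nonneg.2 one_le_E)]

end LogLipschitzOn

lemma logLipschitzOn_abs_of_abs_logDeriv_le {f f' : ℝ → ℝ} {s : Set ℝ} {c : ℝ}
    (hs : Convex ℝ s) (hf : ∀ x ∈ s, HasDerivWithinAt f (f' x) s x) (hne : ∀ x ∈ s, f x ≠ 0)
    (hc : ∀ x ∈ s, |f' x / f x| ≤ c) : LogLipschitzOn c (fun x => |f x|) s := by
  refine ⟨fun x _ => abs_nonneg _, fun x hx y hy => ?_⟩
  have log_lipschitz : |Real.log (f x) - Real.log (f y)| ≤ c * |x - y| :=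
    hs.norm_image_sub_le_of_norm_hasDerivWithin_le
      (fun z hz => (hf z hz).log (hne z hz)) hc hy hx
  rw [← Real.exp_log_eq_abs (hne x hx), ← Real.exp_log_eq_abs (hne y hy), ← Real.exp_add,
    Real.exp_le_exp, Real.dist_eq]
  linarith [le_abs_self (Real.log (f x) - Real.log (f y))]

end LogLipschitz

section UnitIntervalMean

namespace LogLipschitzOn

variable {C : ℝ} {f : ℝ → ℝ}

lemma integrableOn_unitInterval (hf : LogLipschitzOn C f 𝕀) : IntegrableOn f 𝕀 :=
  hf.continuousOn.integrableOn_Icc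

lemma integral_unitInterval_nonneg (hf : LogLipschitzOn C f 𝕀) : 0 ≤ ∫ x in 𝕀, f x :=
  setIntegral_nonneg measurableSet_Icc hf.nonneg

lemma le_exp_mul_integral (hf : LogLipschitzOn C f 𝕀) (hC : 0 ≤ C) {x : ℝ} (hx : x ∈ 𝕀) :
    f x ≤ Real.exp C * ∫ y in 𝕀, f y := by
  calc f x = ∫ _ in 𝕀, f x := by simp
    _ ≤ ∫ y in 𝕀, Real.exp C * f y := by
        refine setIntegral_mono_on continuousOn_const.integrableOn_Icc
          (hf.integrableOn_unitInterval.const_mul _) measurableSet_Icc fun y hy => ?_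
        simpa [mul_comm] using
          hf.le_mul_exp_of_dist_le hC hx hy (Real.dist_le_of_mem_Icc_01 hx hy)
    _ = Real.exp C * ∫ y in 𝕀, f y := integral_const_mul _ _

lemma exp_neg_mul_integral_le (hf : LogLipschitzOn C f 𝕀) (hC : 0 ≤ C) {x : ℝ} (hx : x ∈ 𝕀) :
    Real.exp (-C) * ∫ y in 𝕀, f y ≤ f x := by
  rw [Real.exp_neg, inv_mul_le_iff₀ (Real.exp_pos _)]
  calc ∫ y in 𝕀, f y ≤ ∫ _ in 𝕀, Real.exp C * f x := by
        refine setIntegral_mono_on hf.integrableOn_unitInterval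
          continuousOn_const.integrableOn_Icc measurableSet_Icc fun y hy => ?_
        simpa [mul_comm] using
          hf.le_mul_exp_of_dist_le hC hy hx (Real.dist_le_of_mem_Icc_01 hy hx)
    _ = Real.exp C * f x := by simp

lemma integral_rpow_le (hf : LogLipschitzOn C f 𝕀) {h : ℝ} (h0 : 0 ≤ h) (h1 : h ≤ 1) :
    ∫ x in 𝕀, f x ^ h ≤ (∫ x in 𝕀, f x) ^ h := by
  have : IsProbabilityMeasure (volume.restrict 𝕀) := ⟨by
    rw [Measure.restrict_apply_univ, Real.volume_Icc, sub_zero, ENNReal.ofReal_one]⟩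
  exact (Real.concaveOn_rpow h0 h1).le_map_integral
    (Real.continuous_rpow_const h0).continuousOn isClosed_Ici
    ((ae_restrict_iff' measurableSet_Icc).2 (.of_forall hf.nonneg))
    hf.integrableOn_unitInterval (hf.rpow h0).integrableOn_unitInterval

end LogLipschitzOn

end UnitIntervalMean

section HausdorffTransfer

lemma setLIntegral_biUnion_finset_le {ι X : Type*} [MeasurableSpace X] {μ : Measure X}
    (T : Finset ι) (s : ι → Set X) (f : X → ℝ≥0∞) :
    ∫⁻ x in ⋃ i ∈ T, s i, f x ∂μ ≤ ∑ i ∈ T, ∫⁻ x in s i, f x ∂μ := by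
  classical
  induction T using Finset.induction_on with
  | empty => simp
  | insert i T hi ih =>
    rw [Finset.set_biUnion_insert, Finset.sum_insert hi]
    exact (lintegral_union_le _ _ _).trans (by gcongr)

lemma LogLipschitzOn.ofReal_mul_measure_le_setLIntegral {X : Type*} [PseudoMetricSpace X]
    [MeasurableSpace X] {μ : Measure X} {B : Set X} {F : X → ℝ} {D δ : ℝ} {x₀ : X}
    (hF : LogLipschitzOn D F B) (hD : 0 ≤ D) (hB : MeasurableSet B) (hx₀ : x₀ ∈ B)
    (hdist : ∀ x ∈ B, dist x₀ x ≤ δ) :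
    ENNReal.ofReal (F x₀) * μ B ≤
      ENNReal.ofReal (Real.exp (D * δ)) * ∫⁻ x in B, ENNReal.ofReal (F x) ∂μ := by
  rw [← setLIntegral_const, ← lintegral_const_mul' _ _ ENNReal.ofReal_ne_top]
  refine setLIntegral_mono' hB fun x hx => ?_
  rw [← ENNReal.ofReal_mul (Real.exp_pos _).le, mul_comm]
  exact ENNReal.ofReal_le_ofReal (hF.le_mul_exp_of_dist_le hD hx₀ hx (hdist x hx))

variable {g g' f : ℝ → ℝ} {s J : Set ℝ} {c C h δ : ℝ} {α : ℝ≥0}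

lemma lipschitzOnWith_of_abs_deriv_le (hs : Convex ℝ s)
    (hg : ∀ x ∈ s, HasDerivWithinAt g (g' x) s x) (hα : ∀ x ∈ s, |g' x| ≤ α) :
    LipschitzOnWith α g s :=
  hs.lipschitzOnWith_of_nnnorm_hasDerivWithin_le hg hα

lemma LogLipschitzOn.abs_deriv_rpow_mul_comp (hs : Convex ℝ s)
    (hg : ∀ x ∈ s, HasDerivWithinAt g (g' x) s x) (hα : ∀ x ∈ s, |g' x| ≤ α)
    (hg' : LogLipschitzOn c (fun x => |g' x|) s) (hC : 0 ≤ C)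
    (hf : LogLipschitzOn C f (g '' s)) (h0 : 0 ≤ h) :
    LogLipschitzOn (h * c + C * α) (fun x => |g' x| ^ h * f (g x)) s :=
  (hg'.rpow h0).mul
    (hf.comp hC (lipschitzOnWith_of_abs_deriv_le hs hg hα) (mapsTo_image g s))

lemma hausdorffMeasure_image_le_of_dist_le {B P : Set ℝ} {x₀ : ℝ} (hP : Convex ℝ P)
    (hg : ∀ x ∈ P, HasDerivWithinAt g (g' x) P x) (hc : 0 ≤ c)
    (hg' : LogLipschitzOn c (fun x => |g' x|) P) (h0 : 0 ≤ h) (hBP : B ⊆ P) (hx₀ : x₀ ∈ P)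
    (hdist : ∀ x ∈ P, dist x x₀ ≤ δ) :
    μH[h] (g '' B) ≤ ENNReal.ofReal (|g' x₀| ^ h * Real.exp (h * c * δ)) * μH[h] B := by
  set K := |g' x₀| * Real.exp (c * δ) with hK
  have hK0 : 0 ≤ K := by positivity
  have hlip : LipschitzOnWith K.toNNReal g B :=
    (lipschitzOnWith_of_abs_deriv_le hP hg fun x hx =>
      (hg'.le_mul_exp_of_dist_le hc hx hx₀ (hdist x hx)).trans (Real.le_coe_toNNReal K)).mono hBP
  refine (hlip.hausdorffMeasure_image_le h0).trans_eq ?_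
  congr 1
  change ENNReal.ofReal K ^ h = _
  rw [ENNReal.ofReal_rpow_of_nonneg hK0 h0, hK,
    Real.mul_rpow (abs_nonneg _) (Real.exp_pos _).le, ← Real.exp_mul]
  ring_nf

lemma setLIntegral_image_le_exp_mul {B P : Set ℝ} (hP : Convex ℝ P)
    (hg : ∀ x ∈ P, HasDerivWithinAt g (g' x) P x) (hα : ∀ x ∈ P, |g' x| ≤ α) (hc : 0 ≤ c)
    (hg' : LogLipschitzOn c (fun x => |g' x|) P) (hC : 0 ≤ C)
    (hf : LogLipschitzOn C f (g '' P)) (h0 : 0 ≤ h) (hB : MeasurableSet B) (hBP : B ⊆ P)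
    (hdist : ∀ x ∈ P, ∀ y ∈ P, dist x y ≤ δ) :
    ∫⁻ x in g '' B, ENNReal.ofReal (f x) ∂μH[h] ≤
      ENNReal.ofReal (Real.exp (2 * (h * c + C * α) * δ)) *
        ∫⁻ x in B, ENNReal.ofReal (|g' x| ^ h * f (g x)) ∂μH[h] := by
  rcases B.eq_empty_or_nonempty with rfl | ⟨x₀, hx₀⟩
  · simp
  set D := h * c + C * α with hD
  set F : ℝ → ℝ := fun x => |g' x| ^ h * f (g x) with hFdef
  have hx₀P := hBP hx₀
  have hF : LogLipschitzOn D F P := .abs_deriv_rpow_mul_comp hP hg hα hg' hC hf h0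
  have f_le : ∀ x ∈ g '' B, f x ≤ f (g x₀) * Real.exp (C * α * δ) := by
    rintro _ ⟨x, hx, rfl⟩
    exact (hf.comp hC (lipschitzOnWith_of_abs_deriv_le hP hg hα)
      (mapsTo_image g P)).le_mul_exp_of_dist_le (by positivity) (hBP hx) hx₀P
      (hdist x (hBP hx) x₀ hx₀P)
  have hf₀ := hf.nonneg _ (mem_image_of_mem g hx₀P)
  calc ∫⁻ x in g '' B, ENNReal.ofReal (f x) ∂μH[h]
      ≤ ENNReal.ofReal (f (g x₀) * Real.exp (C * α * δ)) * μH[h] (g '' B) := by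
        rw [← setLIntegral_const]
        exact setLIntegral_mono measurable_const fun x hx => ENNReal.ofReal_le_ofReal (f_le x hx)
    _ ≤ ENNReal.ofReal (f (g x₀) * Real.exp (C * α * δ)) *
          (ENNReal.ofReal (|g' x₀| ^ h * Real.exp (h * c * δ)) * μH[h] B) := by
        gcongr
        exact hausdorffMeasure_image_le_of_dist_le hP hg hc hg' h0 hBP hx₀P
          fun x hx => hdist x hx x₀ hx₀P
    _ = ENNReal.ofReal (Real.exp (D * δ)) * (ENNReal.ofReal (F x₀) * μH[h] B) := by
        rw [← mul_assoc, ← mul_assoc, ← ENNReal.ofReal_mul (by positivity),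
          ← ENNReal.ofReal_mul (by positivity), hD, add_mul, Real.exp_add, hFdef]
        ring_nf
    _ ≤ ENNReal.ofReal (Real.exp (D * δ)) * (ENNReal.ofReal (Real.exp (D * δ)) *
          ∫⁻ x in B, ENNReal.ofReal (F x) ∂μH[h]) := by
        gcongr ENNReal.ofReal (Real.exp (D * δ)) * ?_
        exact (hF.mono_set hBP).ofReal_mul_measure_le_setLIntegral (by positivity) hB hx₀
          fun x hx => hdist x₀ hx₀P x (hBP hx)
    _ = ENNReal.ofReal (Real.exp (2 * D * δ)) * ∫⁻ x in B, ENNReal.ofReal (F x) ∂μH[h] := by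
        rw [← mul_assoc, ← ENNReal.ofReal_mul (Real.exp_pos _).le, ← Real.exp_add]
        ring_nf

lemma dist_le_of_mem_Ico_zsmul {i : ℤ} {x y : ℝ} (hx : x ∈ Ico (i • δ) ((i + 1) • δ))
    (hy : y ∈ Ico (i • δ) ((i + 1) • δ)) : dist x y ≤ δ := by
  rw [add_smul, one_smul] at hx hy
  rw [Real.dist_eq, abs_le]
  constructor <;> linarith [hx.1, hx.2, hy.1, hy.2]

-- The inequality holds on a mesh of size `δ` up to the factor `e^{O(δ)}`; then let `δ → 0`.
lemma setLIntegral_image_hausdorffMeasure_le (hs : Convex ℝ s)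
    (hg : ∀ x ∈ s, HasDerivWithinAt g (g' x) s x) (hα : ∀ x ∈ s, |g' x| ≤ α) (hc : 0 ≤ c)
    (hg' : LogLipschitzOn c (fun x => |g' x|) s) (hC : 0 ≤ C)
    (hf : LogLipschitzOn C f (g '' s)) (h0 : 0 ≤ h) (hJ : MeasurableSet J) (hJs : J ⊆ s) :
    ∫⁻ x in g '' J, ENNReal.ofReal (f x) ∂μH[h] ≤
      ∫⁻ x in J, ENNReal.ofReal (|g' x| ^ h * f (g x)) ∂μH[h] := by
  set F : ℝ → ℝ≥0∞ := fun x => ENNReal.ofReal (|g' x| ^ h * f (g x))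
  set err : ℝ → ℝ≥0∞ := fun δ => ENNReal.ofReal (Real.exp (2 * (h * c + C * α) * δ)) with herr
  have mesh_bound : ∀ δ > 0, ∫⁻ x in g '' J, ENNReal.ofReal (f x) ∂μH[h] ≤
      err δ * ∫⁻ x in J, F x ∂μH[h] := by
    intro δ hδ
    let P : ℤ → Set ℝ := fun i => Ico (i • δ) ((i + 1) • δ)
    have hP : ∀ i, MeasurableSet (P i) := fun i => measurableSet_Ico
    have J_eq : J = ⋃ i, P i ∩ J := by rw [← iUnion_inter, iUnion_Ico_zsmul hδ, univ_inter]
    have hdisj : Pairwise (Function.onFun Disjoint fun i => P i ∩ J) := fun i j hij =>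
      (pairwise_disjoint_Ico_zsmul δ hij).mono inter_subset_left inter_subset_left
    rw [J_eq, image_iUnion, lintegral_iUnion (fun i => (hP i).inter hJ) hdisj,
      ← ENNReal.tsum_mul_left]
    refine (lintegral_iUnion_le _ _).trans (ENNReal.tsum_le_tsum fun i => ?_)
    have hPs : P i ∩ s ⊆ s := inter_subset_right
    exact setLIntegral_image_le_exp_mul ((convex_Ico _ _).inter hs)
      (fun x hx => (hg x (hPs hx)).mono hPs) (fun x hx => hα x (hPs hx)) hc (hg'.mono_set hPs) hC
      (hf.mono_set (image_mono hPs)) h0 ((hP i).inter hJ) (inter_subset_inter_right _ hJs)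
      fun x hx y hy => dist_le_of_mem_Ico_zsmul hx.1 hy.1
  have err_tendsto : Tendsto err (𝓝[>] 0) (𝓝 1) := by
    have : Continuous err := ENNReal.continuous_ofReal.comp (by fun_prop)
    simpa [herr] using this.continuousWithinAt.tendsto (x := 0) (s := Ioi 0)
  have := ENNReal.Tendsto.mul_const (b := ∫⁻ x in J, F x ∂μH[h]) err_tendsto (.inl one_ne_zero)
  rw [one_mul] at this
  exact ge_of_tendsto this (eventually_mem_nhdsWithin.mono mesh_bound)

end HausdorffTransfer

section LimitSet

variable {g : ℕ → ℝ → ℝ} {n : ℕ}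

lemma wordComp_append (w v : List ℕ) (x : ℝ) :
    wordComp g (w ++ v) x = wordComp g w (wordComp g v x) := by
  induction w with
  | nil => rfl
  | cons k w ih => simp only [List.cons_append, wordComp, Function.comp_apply, ih]

lemma mapsTo_wordComp (hmaps : ∀ k ∈ Finset.Icc 1 n, MapsTo (g k) 𝕀 𝕀) {w : List ℕ}
    (hw : ∀ i ∈ w, 1 ≤ i ∧ i ≤ n) : MapsTo (wordComp g w) 𝕀 𝕀 := by
  induction w with
  | nil => exact mapsTo_id _
  | cons k w ih =>
    rw [List.forall_mem_cons] at hw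
    exact (hmaps k (Finset.mem_Icc.2 hw.1)).comp (ih hw.2)

lemma continuousOn_wordComp (hmaps : ∀ k ∈ Finset.Icc 1 n, MapsTo (g k) 𝕀 𝕀)
    (hcont : ∀ k ∈ Finset.Icc 1 n, ContinuousOn (g k) 𝕀) {w : List ℕ}
    (hw : ∀ i ∈ w, 1 ≤ i ∧ i ≤ n) : ContinuousOn (wordComp g w) 𝕀 := by
  induction w with
  | nil => exact continuousOn_id
  | cons k w ih =>
    rw [List.forall_mem_cons] at hw
    exact (hcont k (Finset.mem_Icc.2 hw.1)).comp (ih hw.2) (mapsTo_wordComp hmaps hw.2)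

/-- The union of the cylinder intervals of the words of length `l` over `{1, …, n}`; the limit set
is the intersection of these unions over `l ≥ 1`. -/
def cylinderUnion (g : ℕ → ℝ → ℝ) (n l : ℕ) : Set ℝ :=
  ⋃ w ∈ {w : List ℕ | w.length = l ∧ ∀ i ∈ w, 1 ≤ i ∧ i ≤ n}, wordComp g w '' 𝕀

lemma mem_cylinderUnion {l : ℕ} {x : ℝ} :
    x ∈ cylinderUnion g n l ↔
      ∃ w : List ℕ, (w.length = l ∧ ∀ i ∈ w, 1 ≤ i ∧ i ≤ n) ∧ ∃ y ∈ 𝕀, wordComp g w y = x := by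
  simp only [cylinderUnion, mem_iUnion, mem_ofPred_eq, mem_image, exists_prop]

lemma mem_limitSet {x : ℝ} : x ∈ limitSet g n ↔ ∀ l, x ∈ cylinderUnion g n (l + 1) :=
  mem_iInter

lemma cylinderUnion_subset (hmaps : ∀ k ∈ Finset.Icc 1 n, MapsTo (g k) 𝕀 𝕀) (l : ℕ) :
    cylinderUnion g n l ⊆ 𝕀 :=
  iUnion₂_subset fun _ hw => (mapsTo_wordComp hmaps hw.2).image_subset

lemma cylinderUnion_antitone (hmaps : ∀ k ∈ Finset.Icc 1 n, MapsTo (g k) 𝕀 𝕀) :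
    Antitone (cylinderUnion g n) := by
  intro l m hlm x hx
  obtain ⟨w, ⟨hlen, hw⟩, y, hy, rfl⟩ := mem_cylinderUnion.1 hx
  refine mem_cylinderUnion.2 ⟨w.take l, ⟨by simp [hlen, hlm],
    fun i hi => hw i (List.mem_of_mem_take hi)⟩, wordComp g (w.drop l) y,
    mapsTo_wordComp hmaps (fun i hi => hw i (List.mem_of_mem_drop hi)) hy, ?_⟩
  rw [← wordComp_append, List.take_append_drop]

lemma cylinderUnion_succ_subset (l : ℕ) :
    cylinderUnion g n (l + 1) ⊆ ⋃ k ∈ Finset.Icc 1 n, g k '' cylinderUnion g n l := by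
  intro x hx
  obtain ⟨w, ⟨hlen, hw⟩, y, hy, rfl⟩ := mem_cylinderUnion.1 hx
  obtain ⟨k, w, rfl⟩ := List.exists_cons_of_length_eq_add_one hlen
  rw [List.forall_mem_cons] at hw
  exact mem_iUnion₂.2 ⟨k, Finset.mem_Icc.2 hw.1, wordComp g w y,
    mem_cylinderUnion.2 ⟨w, ⟨by simpa using hlen, hw.2⟩, y, hy, rfl⟩, rfl⟩

lemma limitSet_subset_unitInterval (hmaps : ∀ k ∈ Finset.Icc 1 n, MapsTo (g k) 𝕀 𝕀) :
    limitSet g n ⊆ 𝕀 :=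
  fun _ hx => cylinderUnion_subset hmaps _ (mem_limitSet.1 hx 0)

lemma measurableSet_limitSet (hmaps : ∀ k ∈ Finset.Icc 1 n, MapsTo (g k) 𝕀 𝕀)
    (hcont : ∀ k ∈ Finset.Icc 1 n, ContinuousOn (g k) 𝕀) : MeasurableSet (limitSet g n) :=
  .iInter fun _ => .biUnion (to_countable _) fun _ hw =>
    (isCompact_Icc.image_of_continuousOn (continuousOn_wordComp hmaps hcont hw.2)).measurableSet

lemma limitSet_subset_iUnion_image (hmaps : ∀ k ∈ Finset.Icc 1 n, MapsTo (g k) 𝕀 𝕀)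
    (hinj : ∀ k ∈ Finset.Icc 1 n, InjOn (g k) 𝕀) :
    limitSet g n ⊆ ⋃ k ∈ Finset.Icc 1 n, g k '' limitSet g n := by
  intro x hx
  rw [mem_limitSet] at hx
  -- Pigeonhole: if every letter failed at some level, all would fail at the largest such level.
  obtain ⟨k, hk, hxk⟩ : ∃ k ∈ Finset.Icc 1 n, ∀ l, x ∈ g k '' cylinderUnion g n l := by
    by_contra! hfail
    choose! L hL using hfail
    obtain ⟨k, hk, hxk⟩ := mem_iUnion₂.1 (cylinderUnion_succ_subset _
      (hx ((Finset.Icc 1 n).sup L)))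
    exact hL k hk (image_mono (cylinderUnion_antitone hmaps (Finset.le_sup hk)) hxk)
  obtain ⟨y, hy, rfl⟩ := hxk 0
  refine mem_iUnion₂.2 ⟨k, hk, y, mem_limitSet.2 fun l => ?_, rfl⟩
  obtain ⟨z, hz, hzy⟩ := hxk (l + 1)
  rwa [← hinj k hk (cylinderUnion_subset hmaps _ hz) (cylinderUnion_subset hmaps _ hy) hzy]

end LimitSet

section TransferOperator

/-- A countable family of injective maps `g k` (`k ≥ 1`), with derivatives `g' k`, sending `[0,1]`
onto the adjacent intervals `[b k, b (k - 1)]` of `[0,1]`; they contract uniformly by `α` and the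
functions `log |g' k|` are uniformly `c`-Lipschitz. The value `g 0` is irrelevant. -/
structure BoundedDistortionIFS (b : ℕ → ℝ) (g g' : ℕ → ℝ → ℝ) (c α : ℝ≥0) : Prop where
  antitone : Antitone b
  mem_unitInterval : ∀ k, b k ∈ 𝕀
  image_eq : ∀ k, 1 ≤ k → g k '' 𝕀 = Icc (b k) (b (k - 1))
  injOn : ∀ k, 1 ≤ k → InjOn (g k) 𝕀
  hasDerivWithinAt : ∀ k, 1 ≤ k → ∀ x ∈ 𝕀, HasDerivWithinAt (g k) (g' k x) 𝕀 x
  logLipschitzOn : ∀ k, 1 ≤ k → LogLipschitzOn c (fun x => |g' k x|) 𝕀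
  abs_deriv_le : ∀ k, 1 ≤ k → ∀ x ∈ 𝕀, |g' k x| ≤ α
  alpha_lt_one : α < 1

/-- The Ruelle transfer operator of `{g 1, …, g n}` with potential `|g'| ^ h`. For `h = 1` it
transports Lebesgue densities; `h`-dimensional Hausdorff measure is subinvariant under its dual. -/
def transferOperator (g g' : ℕ → ℝ → ℝ) (n : ℕ) (h : ℝ) (f : ℝ → ℝ) (x : ℝ) : ℝ :=
  ∑ k ∈ Finset.Icc 1 n, |g' k x| ^ h * f (g k x)

lemma transferOperator_succ (g g' : ℕ → ℝ → ℝ) (n : ℕ) (h : ℝ) (f : ℝ → ℝ) (x : ℝ) :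
    transferOperator g g' (n + 1) h f x =
      transferOperator g g' n h f x + |g' (n + 1) x| ^ h * f (g (n + 1) x) :=
  Finset.sum_Icc_succ_top (Nat.le_add_left 1 n) _

/-- Bound for the excess of the `h`-transfer operator over the `1`-transfer operator, relative to
the supremum of the density. -/
def transferError (c h : ℝ) (n : ℕ) : ℝ :=
  ((n : ℝ) ^ (1 - h) - 1) * Real.exp c + (n : ℝ) ^ (1 - h) * (1 - h)

lemma one_le_natCast_rpow_one_sub {h : ℝ} {n : ℕ} (h1 : h ≤ 1) (hn : 1 ≤ n) :
    1 ≤ (n : ℝ) ^ (1 - h) :=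
  Real.one_le_rpow (by exact_mod_cast hn) (sub_nonneg.2 h1)

lemma transferError_nonneg (c : ℝ) {h : ℝ} {n : ℕ} (h1 : h ≤ 1) (hn : 1 ≤ n) :
    0 ≤ transferError c h n := by
  have := sub_nonneg.2 (one_le_natCast_rpow_one_sub h1 hn)
  have := sub_nonneg.2 h1
  unfold transferError
  positivity

namespace BoundedDistortionIFS

variable {b : ℕ → ℝ} {g g' : ℕ → ℝ → ℝ} {c α : ℝ≥0} {f : ℝ → ℝ} {C h x : ℝ} {k n : ℕ}

lemma sub_pred_nonneg (S : BoundedDistortionIFS b g g' c α) (k : ℕ) : 0 ≤ b (k - 1) - b k :=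
  sub_nonneg.2 (S.antitone (Nat.sub_le k 1))

lemma mapsTo (S : BoundedDistortionIFS b g g' c α) (hk : 1 ≤ k) : MapsTo (g k) 𝕀 𝕀 := by
  rw [mapsTo_iff_image_subset, S.image_eq k hk]
  exact Icc_subset_Icc (S.mem_unitInterval _).1 (S.mem_unitInterval _).2

lemma limitSet_subset (S : BoundedDistortionIFS b g g' c α) (n : ℕ) : limitSet g n ⊆ 𝕀 :=
  limitSet_subset_unitInterval fun _ hk => S.mapsTo (Finset.mem_Icc.1 hk).1

lemma measurableSet_limitSet (S : BoundedDistortionIFS b g g' c α) (n : ℕ) :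
    MeasurableSet (limitSet g n) :=
  _root_.measurableSet_limitSet (fun _ hk => S.mapsTo (Finset.mem_Icc.1 hk).1) fun k hk x hx =>
    (S.hasDerivWithinAt k (Finset.mem_Icc.1 hk).1 x hx).continuousWithinAt

lemma limitSet_subset_iUnion_image (S : BoundedDistortionIFS b g g' c α) (n : ℕ) :
    limitSet g n ⊆ ⋃ k ∈ Finset.Icc 1 n, g k '' limitSet g n :=
  _root_.limitSet_subset_iUnion_image (fun _ hk => S.mapsTo (Finset.mem_Icc.1 hk).1)
    fun k hk => S.injOn k (Finset.mem_Icc.1 hk).1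

lemma logLipschitzOn_rpow_mul_comp (S : BoundedDistortionIFS b g g' c α) (hk : 1 ≤ k) (hC : 0 ≤ C)
    (hf : LogLipschitzOn C f 𝕀) (h0 : 0 ≤ h) :
    LogLipschitzOn (h * c + C * α) (fun x => |g' k x| ^ h * f (g k x)) 𝕀 :=
  .abs_deriv_rpow_mul_comp (convex_Icc 0 1) (S.hasDerivWithinAt k hk) (S.abs_deriv_le k hk)
    (S.logLipschitzOn k hk) hC (hf.mono_set (S.mapsTo hk).image_subset) h0

lemma logLipschitzOn_transferOperator (S : BoundedDistortionIFS b g g' c α) (hC : 0 ≤ C)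
    (hf : LogLipschitzOn C f 𝕀) (h0 : 0 ≤ h) (n : ℕ) :
    LogLipschitzOn (h * c + C * α) (transferOperator g g' n h f) 𝕀 :=
  .sum fun _ hk => S.logLipschitzOn_rpow_mul_comp (Finset.mem_Icc.1 hk).1 hC hf h0

lemma integral_abs_deriv_mul_comp (S : BoundedDistortionIFS b g g' c α) (hk : 1 ≤ k)
    (f : ℝ → ℝ) : ∫ x in 𝕀, |g' k x| * f (g k x) = ∫ x in b k..b (k - 1), f x := by
  rw [intervalIntegral.integral_of_le (S.antitone (Nat.sub_le k 1)),
    ← integral_Icc_eq_integral_Ioc, ← S.image_eq k hk]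
  exact (integral_image_eq_integral_abs_deriv_smul measurableSet_Icc
    (S.hasDerivWithinAt k hk) (S.injOn k hk) f).symm

lemma integral_abs_deriv (S : BoundedDistortionIFS b g g' c α) (hk : 1 ≤ k) :
    ∫ x in 𝕀, |g' k x| = b (k - 1) - b k := by
  simpa using S.integral_abs_deriv_mul_comp hk fun _ => 1

lemma integral_transferOperator_one (S : BoundedDistortionIFS b g g' c α) (hC : 0 ≤ C)
    (hf : LogLipschitzOn C f 𝕀) (n : ℕ) :
    ∫ x in 𝕀, transferOperator g g' n 1 f x = ∫ x in b n..b 0, f x := by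
  have integrable (i j : ℕ) : IntervalIntegrable f volume (b i) (b j) :=
    (hf.continuousOn.mono ((convex_Icc (0 : ℝ) 1).ordConnected.uIcc_subset
      (S.mem_unitInterval i) (S.mem_unitInterval j))).intervalIntegrable
  induction n with
  | zero => simp [transferOperator]
  | succ n ih =>
    have hn : 1 ≤ n + 1 := Nat.le_add_left 1 n
    simp only [transferOperator_succ]
    rw [integral_add
      (S.logLipschitzOn_transferOperator hC hf zero_le_one n).integrableOn_unitInterval
      (S.logLipschitzOn_rpow_mul_comp hn hC hf zero_le_one).integrableOn_unitInterval, ih, add_comm]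
    simp only [Real.rpow_one, S.integral_abs_deriv_mul_comp hn, Nat.add_sub_cancel]
    exact intervalIntegral.integral_add_adjacent_intervals (integrable _ _) (integrable _ _)

lemma integral_transferOperator_one_le (S : BoundedDistortionIFS b g g' c α) (hC : 0 ≤ C)
    (hf : LogLipschitzOn C f 𝕀) (n : ℕ) :
    ∫ x in 𝕀, transferOperator g g' n 1 f x ≤ ∫ x in 𝕀, f x := by
  rw [S.integral_transferOperator_one hC hf, intervalIntegral.integral_of_le
    (S.antitone n.zero_le), ← integral_Icc_eq_integral_Ioc]
  exact setIntegral_mono_set hf.integrableOn_unitInterval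
    ((ae_restrict_iff' measurableSet_Icc).2 (.of_forall hf.nonneg))
    (Icc_subset_Icc (S.mem_unitInterval n).1 (S.mem_unitInterval 0).2).eventuallyLE

lemma sum_abs_deriv_le_exp (S : BoundedDistortionIFS b g g' c α) (n : ℕ) (hx : x ∈ 𝕀) :
    ∑ k ∈ Finset.Icc 1 n, |g' k x| ≤ Real.exp c := by
  have hone : LogLipschitzOn 0 (fun _ : ℝ => (1 : ℝ)) 𝕀 := .const zero_le_one _
  have hL := S.logLipschitzOn_transferOperator le_rfl hone zero_le_one n
  rw [zero_mul, add_zero, one_mul] at hL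
  calc ∑ k ∈ Finset.Icc 1 n, |g' k x| = transferOperator g g' n 1 (fun _ => 1) x := by
        simp only [transferOperator, Real.rpow_one, mul_one]
    _ ≤ Real.exp c * ∫ y in 𝕀, transferOperator g g' n 1 (fun _ => 1) y :=
        hL.le_exp_mul_integral c.coe_nonneg hx
    _ ≤ Real.exp c * ∫ _ in 𝕀, (1 : ℝ) := by
        gcongr Real.exp c * ?_
        exact S.integral_transferOperator_one_le le_rfl hone n
    _ = Real.exp c := by simp

lemma sum_abs_deriv_rpow_le (S : BoundedDistortionIFS b g g' c α) (hn : 1 ≤ n) (h0 : 0 ≤ h)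
    (h1 : h ≤ 1) (hx : x ∈ 𝕀) :
    ∑ k ∈ Finset.Icc 1 n, |g' k x| ^ h ≤
      ∑ k ∈ Finset.Icc 1 n, |g' k x| + transferError c h n := by
  set N := (n : ℝ) ^ (1 - h)
  set σ := ∑ k ∈ Finset.Icc 1 n, |g' k x|
  have : 0 ≤ N - 1 := sub_nonneg.2 <| one_le_natCast_rpow_one_sub h1 hn
  calc ∑ k ∈ Finset.Icc 1 n, |g' k x| ^ h ≤ N * σ ^ h := by
        simpa using sum_rpow_le_card_rpow_mul_rpow_sum (Finset.Icc 1 n)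
          (fun k _ => abs_nonneg (g' k x)) h0 h1
    _ ≤ N * (σ + (1 - h)) := by
        gcongr
        exact rpow_le_add_one_sub (Finset.sum_nonneg fun _ _ => abs_nonneg _) h0 h1
    _ = σ + ((N - 1) * σ + N * (1 - h)) := by ring
    _ ≤ σ + transferError c h n := by
        unfold transferError
        gcongr
        exact S.sum_abs_deriv_le_exp n hx

lemma transferOperator_le_add_transferError (S : BoundedDistortionIFS b g g' c α) (hC : 0 ≤ C)
    (hf : LogLipschitzOn C f 𝕀) (hn : 1 ≤ n) (h0 : 0 ≤ h) (h1 : h ≤ 1) (hx : x ∈ 𝕀) :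
    transferOperator g g' n h f x ≤
      transferOperator g g' n 1 f x + transferError c h n * (Real.exp C * ∫ y in 𝕀, f y) := by
  set M := Real.exp C * ∫ y in 𝕀, f y
  have hM : 0 ≤ M := mul_nonneg (Real.exp_pos C).le hf.integral_unitInterval_nonneg
  have branch_le : ∀ k ∈ Finset.Icc 1 n,
      |g' k x| ^ h * f (g k x) ≤ |g' k x| * f (g k x) + (|g' k x| ^ h - |g' k x|) * M := by
    intro k hk
    have hk1 := (Finset.mem_Icc.1 hk).1
    have deriv_le_one : |g' k x| ≤ 1 :=
      (S.abs_deriv_le k hk1 x hx).trans (by exact_mod_cast S.alpha_lt_one.le)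
    have deriv_le_rpow : |g' k x| ≤ |g' k x| ^ h := by
      simpa using Real.rpow_le_rpow_of_exponent_ge' (abs_nonneg _) deriv_le_one h0 h1
    have f_le : f (g k x) ≤ M := hf.le_exp_mul_integral hC (S.mapsTo hk1 hx)
    nlinarith
  calc transferOperator g g' n h f x
      ≤ ∑ k ∈ Finset.Icc 1 n, (|g' k x| * f (g k x) + (|g' k x| ^ h - |g' k x|) * M) :=
        Finset.sum_le_sum branch_le
    _ = transferOperator g g' n 1 f x +
          (∑ k ∈ Finset.Icc 1 n, |g' k x| ^ h - ∑ k ∈ Finset.Icc 1 n, |g' k x|) * M := by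
        simp only [transferOperator, Real.rpow_one, Finset.sum_add_distrib, ← Finset.sum_mul,
          Finset.sum_sub_distrib]
    _ ≤ transferOperator g g' n 1 f x + transferError c h n * M := by
        gcongr
        exact sub_le_iff_le_add'.2 (S.sum_abs_deriv_rpow_le hn h0 h1 hx)

lemma setLIntegral_image_limitSet_le (S : BoundedDistortionIFS b g g' c α) (hk : 1 ≤ k)
    (hC : 0 ≤ C) (hf : LogLipschitzOn C f 𝕀) (h0 : 0 ≤ h) (n : ℕ) :
    ∫⁻ x in g k '' limitSet g n, ENNReal.ofReal (f x) ∂μH[h] ≤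
      ∫⁻ x in limitSet g n, ENNReal.ofReal (|g' k x| ^ h * f (g k x)) ∂μH[h] :=
  setLIntegral_image_hausdorffMeasure_le (convex_Icc 0 1) (S.hasDerivWithinAt k hk)
    (S.abs_deriv_le k hk) c.coe_nonneg (S.logLipschitzOn k hk) hC
    (hf.mono_set (S.mapsTo hk).image_subset) h0 (S.measurableSet_limitSet n) (S.limitSet_subset n)

lemma setLIntegral_limitSet_le_transferOperator (S : BoundedDistortionIFS b g g' c α)
    (hC : 0 ≤ C) (hf : LogLipschitzOn C f 𝕀) (h0 : 0 ≤ h) (n : ℕ) :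
    ∫⁻ x in limitSet g n, ENNReal.ofReal (f x) ∂μH[h] ≤
      ∫⁻ x in limitSet g n, ENNReal.ofReal (transferOperator g g' n h f x) ∂μH[h] := by
  have hJ := S.measurableSet_limitSet n
  have branch {k : ℕ} (hk : k ∈ Finset.Icc 1 n) :=
    (S.logLipschitzOn_rpow_mul_comp (Finset.mem_Icc.1 hk).1 hC hf h0).mono_set (S.limitSet_subset n)
  calc ∫⁻ x in limitSet g n, ENNReal.ofReal (f x) ∂μH[h]
      ≤ ∑ k ∈ Finset.Icc 1 n, ∫⁻ x in g k '' limitSet g n, ENNReal.ofReal (f x) ∂μH[h] :=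
        (lintegral_mono_set (S.limitSet_subset_iUnion_image n)).trans
          (setLIntegral_biUnion_finset_le _ _ _)
    _ ≤ ∑ k ∈ Finset.Icc 1 n,
          ∫⁻ x in limitSet g n, ENNReal.ofReal (|g' k x| ^ h * f (g k x)) ∂μH[h] :=
        Finset.sum_le_sum fun k hk =>
          S.setLIntegral_image_limitSet_le (Finset.mem_Icc.1 hk).1 hC hf h0 n
    _ = ∫⁻ x in limitSet g n, ∑ k ∈ Finset.Icc 1 n,
          ENNReal.ofReal (|g' k x| ^ h * f (g k x)) ∂μH[h] :=
        (lintegral_finsetSum' _ fun k hk =>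
          ((branch hk).continuousOn.aemeasurable hJ).ennreal_ofReal).symm
    _ = ∫⁻ x in limitSet g n, ENNReal.ofReal (transferOperator g g' n h f x) ∂μH[h] :=
        setLIntegral_congr_fun hJ fun x hx =>
          (ENNReal.ofReal_sum_of_nonneg fun k hk => (branch hk).nonneg x hx).symm

end BoundedDistortionIFS

end TransferOperator

section DensityBound

/-- On the cone of log-`C`-Lipschitz densities, the average over `J` with respect to `h`-dimensional
Hausdorff measure is at most `K` times the Lebesgue average over `[0,1]`. The bound is multiplied by
the measure of `J` to make sense when that measure is `0` or `∞`. -/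
def HausdorffIntegralBound (h : ℝ) (J : Set ℝ) (C K : ℝ) : Prop :=
  ∀ f, LogLipschitzOn C f 𝕀 →
    ∫⁻ x in J, ENNReal.ofReal (f x) ∂μH[h] ≤ ENNReal.ofReal (K * ∫ x in 𝕀, f x) * μH[h] J

lemma one_sub_mul_exp_neg_nonneg {s C : ℝ} (hs : s ≤ 1) (hC : 0 ≤ C) :
    0 ≤ 1 - s * Real.exp (-C) :=
  sub_nonneg.2 (mul_le_one₀ hs (Real.exp_pos _).le (Real.exp_le_one_iff.2 (neg_nonpos.2 hC)))

namespace HausdorffIntegralBound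

variable {h C K s : ℝ} {J : Set ℝ}

lemma of_exp_le (hJ : J ⊆ 𝕀) (hC : 0 ≤ C) (hK : Real.exp C ≤ K) :
    HausdorffIntegralBound h J C K := by
  intro f hf
  rw [← setLIntegral_const]
  refine setLIntegral_mono measurable_const fun x hx => ENNReal.ofReal_le_ofReal ?_
  exact (hf.le_exp_mul_integral hC (hJ hx)).trans
    (mul_le_mul_of_nonneg_right hK hf.integral_unitInterval_nonneg)

lemma of_tendsto {K' : ℕ → ℝ} (hbound : ∀ j, HausdorffIntegralBound h J C (K' j))
    (hlim : Tendsto K' atTop (𝓝 K)) (hK : 0 < K) : HausdorffIntegralBound h J C K := by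
  intro f hf
  rcases hf.integral_unitInterval_nonneg.eq_or_lt' with hzero | hpos
  · simpa [hzero] using hbound 0 f hf
  · have := ENNReal.Tendsto.mul_const (b := μH[h] J)
      (ENNReal.tendsto_ofReal (hlim.mul_const (∫ x in 𝕀, f x)))
      (.inl (ENNReal.ofReal_pos.2 (mul_pos hK hpos)).ne')
    exact ge_of_tendsto' this fun j => hbound j f hf

-- The constant split off from `F` is integrated exactly, and the remainder stays in the cone.
lemma setLIntegral_le_of_logLipschitzOn {D : ℝ} {F : ℝ → ℝ}
    (hbound : HausdorffIntegralBound h J C K) (hK : 0 ≤ K) (hJ : MeasurableSet J) (hJ𝕀 : J ⊆ 𝕀)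
    (hC : 0 ≤ C) (hs0 : 0 ≤ s) (hs1 : s ≤ 1) (hDC : D ≤ (1 - s) * C) (hF : LogLipschitzOn D F 𝕀) :
    ∫⁻ x in J, ENNReal.ofReal (F x) ∂μH[h] ≤
      ENNReal.ofReal (((1 - s * Real.exp (-C)) * K + s * Real.exp (-C)) * ∫ x in 𝕀, F x) *
        μH[h] J := by
  set θ := s * Real.exp (-C) with hθ
  set τ := θ * ∫ x in 𝕀, F x with hτ
  have hFC : LogLipschitzOn C F 𝕀 := hF.mono (by nlinarith)
  have hI := hFC.integral_unitInterval_nonneg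
  have hθ1 : 0 ≤ 1 - θ := one_sub_mul_exp_neg_nonneg hs1 hC
  have remainder : LogLipschitzOn C (fun x => F x - τ) 𝕀 := by
    refine hF.sub_const hC hs0 hs1 hDC fun x hx => ?_
    rw [hτ, hθ, mul_assoc]
    exact mul_le_mul_of_nonneg_left (hFC.exp_neg_mul_integral_le hC hx) hs0
  have integral_remainder : ∫ x in 𝕀, (F x - τ) = (1 - θ) * ∫ x in 𝕀, F x := by
    rw [integral_sub hF.integrableOn_unitInterval continuousOn_const.integrableOn_Icc,
      setIntegral_const, Real.volume_real_Icc_of_le zero_le_one, sub_zero, one_smul, hτ, sub_mul,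
      one_mul]
  calc ∫⁻ x in J, ENNReal.ofReal (F x) ∂μH[h]
      = ∫⁻ x in J, (ENNReal.ofReal (F x - τ) + ENNReal.ofReal τ) ∂μH[h] :=
        setLIntegral_congr_fun hJ fun x hx => by
          simp only [← ENNReal.ofReal_add (remainder.nonneg x (hJ𝕀 hx)) (by positivity : 0 ≤ τ),
            sub_add_cancel]
    _ = ∫⁻ x in J, ENNReal.ofReal (F x - τ) ∂μH[h] + ENNReal.ofReal τ * μH[h] J := by
        rw [lintegral_add_right _ measurable_const, setLIntegral_const]
    _ ≤ ENNReal.ofReal (K * ((1 - θ) * ∫ x in 𝕀, F x)) * μH[h] J +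
          ENNReal.ofReal τ * μH[h] J := by
        gcongr
        exact integral_remainder ▸ hbound _ remainder
    _ = ENNReal.ofReal (((1 - θ) * K + θ) * ∫ x in 𝕀, F x) * μH[h] J := by
        rw [← add_mul, ← ENNReal.ofReal_add (by positivity) (by positivity), hτ]
        ring_nf

end HausdorffIntegralBound

namespace BoundedDistortionIFS

variable {b : ℕ → ℝ} {g g' : ℕ → ℝ → ℝ} {c α : ℝ≥0} {C K h s : ℝ} {k n : ℕ}

lemma hausdorffIntegralBound_step (S : BoundedDistortionIFS b g g' c α) (hn : 1 ≤ n) (h0 : 0 ≤ h)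
    (h1 : h ≤ 1) (hC : 0 ≤ C) (hs0 : 0 ≤ s) (hs1 : s ≤ 1) (hsC : c + C * α ≤ (1 - s) * C)
    (hK : 0 ≤ K) (hbound : HausdorffIntegralBound h (limitSet g n) C K) :
    HausdorffIntegralBound h (limitSet g n) C
      ((1 - s * Real.exp (-C)) * K + s * Real.exp (-C) + transferError c h n * Real.exp C) := by
  intro f hf
  set J := limitSet g n
  set θ := s * Real.exp (-C)
  set I := ∫ x in 𝕀, f x
  set e := transferError c h n * (Real.exp C * I) with he
  have hI : 0 ≤ I := hf.integral_unitInterval_nonneg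
  have he0 : 0 ≤ e := mul_nonneg (transferError_nonneg _ h1 hn) (by positivity)
  have hθ : 0 ≤ 1 - θ := one_sub_mul_exp_neg_nonneg hs1 hC
  have hL := S.logLipschitzOn_transferOperator hC hf zero_le_one n
  rw [one_mul] at hL
  calc ∫⁻ x in J, ENNReal.ofReal (f x) ∂μH[h]
      ≤ ∫⁻ x in J, ENNReal.ofReal (transferOperator g g' n h f x) ∂μH[h] :=
        S.setLIntegral_limitSet_le_transferOperator hC hf h0 n
    _ ≤ ∫⁻ x in J, (ENNReal.ofReal (transferOperator g g' n 1 f x) + ENNReal.ofReal e) ∂μH[h] :=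
        setLIntegral_mono' (S.measurableSet_limitSet n) fun x hx =>
          (ENNReal.ofReal_le_ofReal (S.transferOperator_le_add_transferError hC hf hn h0 h1
            (S.limitSet_subset n hx))).trans ENNReal.ofReal_add_le
    _ = ∫⁻ x in J, ENNReal.ofReal (transferOperator g g' n 1 f x) ∂μH[h] +
          ENNReal.ofReal e * μH[h] J := by
        rw [lintegral_add_right _ measurable_const, setLIntegral_const]
    _ ≤ ENNReal.ofReal (((1 - θ) * K + θ) * I) * μH[h] J + ENNReal.ofReal e * μH[h] J := by
        refine add_le_add_left ((hbound.setLIntegral_le_of_logLipschitzOn hK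
          (S.measurableSet_limitSet n) (S.limitSet_subset n) hC hs0 hs1 hsC hL).trans ?_) _
        gcongr
        exact S.integral_transferOperator_one_le hC hf n
    _ = ENNReal.ofReal (((1 - θ) * K + θ + transferError c h n * Real.exp C) * I) * μH[h] J := by
        rw [← add_mul, ← ENNReal.ofReal_add (by positivity) he0, he]
        ring_nf

lemma hausdorffIntegralBound (S : BoundedDistortionIFS b g g' c α) (hn : 1 ≤ n) (h0 : 0 ≤ h)
    (h1 : h ≤ 1) (hC : 0 ≤ C) (hs0 : 0 < s) (hs1 : s ≤ 1) (hsC : c + C * α ≤ (1 - s) * C) :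
    HausdorffIntegralBound h (limitSet g n) C
      (1 + transferError c h n * Real.exp C / (s * Real.exp (-C))) := by
  set θ := s * Real.exp (-C) with hθ
  set K := 1 + transferError c h n * Real.exp C / θ with hK
  have hθ0 : 0 < θ := by positivity
  have hθ1 : 0 ≤ 1 - θ := one_sub_mul_exp_neg_nonneg hs1 hC
  have herr := transferError_nonneg (c : ℝ) h1 hn
  have hK0 : 0 < K := by positivity
  -- `K` is the fixed point of the recursion in `hausdorffIntegralBound_step`.
  have iterate (j : ℕ) :
      HausdorffIntegralBound h (limitSet g n) C (K + (1 - θ) ^ j * Real.exp C) := by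
    induction j with
    | zero => exact .of_exp_le (S.limitSet_subset n) hC (by linarith)
    | succ j ih =>
      convert S.hausdorffIntegralBound_step hn h0 h1 hC hs0.le hs1 hsC (by positivity) ih using 1
      rw [← hθ, hK]
      field_simp
      ring
  refine .of_tendsto iterate ?_ hK0
  simpa using ((tendsto_pow_atTop_nhds_zero_of_lt_one hθ1 (by linarith)).mul_const
    (Real.exp C)).const_add K

lemma hausdorffMeasure_image_limitSet_le (S : BoundedDistortionIFS b g g' c α) (hk : 1 ≤ k)
    (h0 : 0 ≤ h) (h1 : h ≤ 1) (hcC : c ≤ C) (hK : 0 ≤ K)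
    (hbound : HausdorffIntegralBound h (limitSet g n) C K) :
    μH[h] (g k '' limitSet g n) ≤
      ENNReal.ofReal (K * (b (k - 1) - b k) ^ h) * μH[h] (limitSet g n) := by
  have hrpow : LogLipschitzOn C (fun x => |g' k x| ^ h) 𝕀 :=
    ((S.logLipschitzOn k hk).rpow h0).mono ((mul_le_of_le_one_left c.coe_nonneg h1).trans hcC)
  calc μH[h] (g k '' limitSet g n)
      ≤ ∫⁻ x in limitSet g n, ENNReal.ofReal (|g' k x| ^ h) ∂μH[h] := by
        simpa using S.setLIntegral_image_limitSet_le hk le_rfl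
          (.const zero_le_one _ : LogLipschitzOn 0 (fun _ => (1 : ℝ)) 𝕀) h0 n
    _ ≤ ENNReal.ofReal (K * ∫ x in 𝕀, |g' k x| ^ h) * μH[h] (limitSet g n) := hbound _ hrpow
    _ ≤ ENNReal.ofReal (K * (b (k - 1) - b k) ^ h) * μH[h] (limitSet g n) := by
        gcongr
        rw [← S.integral_abs_deriv hk]
        exact (S.logLipschitzOn k hk).integral_rpow_le h0 h1

lemma Icc_inter_limitSet_subset (S : BoundedDistortionIFS b g g' c α) (l m n : ℕ) :
    Icc (b m) (b l) ∩ limitSet g n ⊆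
      (⋃ k ∈ Finset.Ioc l m ∩ Finset.Icc 1 n, g k '' limitSet g n) ∪ {b l, b m} := by
  rintro x ⟨hx, hxJ⟩
  obtain ⟨k, hk, hxk⟩ := mem_iUnion₂.1 (S.limitSet_subset_iUnion_image n hxJ)
  have hk1 := (Finset.mem_Icc.1 hk).1
  have hxb : x ∈ Icc (b k) (b (k - 1)) := S.image_eq k hk1 ▸ image_mono (S.limitSet_subset n) hxk
  rcases le_or_gt k l with hkl | hlk
  · exact .inr (.inl (le_antisymm hx.2 ((S.antitone hkl).trans hxb.1)))
  rcases le_or_gt k m with hkm | hmk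
  · exact .inl (mem_iUnion₂.2
      ⟨k, Finset.mem_inter.2 ⟨Finset.mem_Ioc.2 ⟨hlk, hkm⟩, hk⟩, hxk⟩)
  · exact .inr (.inr (le_antisymm (hxb.2.trans (S.antitone (Nat.le_sub_one_of_lt hmk))) hx.1))

lemma sum_sub_pred_rpow_le (S : BoundedDistortionIFS b g g' c α) (h0 : 0 ≤ h) (h1 : h ≤ 1)
    {l m : ℕ} (hlm : l ≤ m) (n : ℕ) :
    ∑ k ∈ Finset.Ioc l m ∩ Finset.Icc 1 n, (b (k - 1) - b k) ^ h ≤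
      (n : ℝ) ^ (1 - h) * (b l - b m) ^ h := by
  set T := Finset.Ioc l m ∩ Finset.Icc 1 n
  have card_le : T.card ≤ n := by
    simpa using Finset.card_le_card (Finset.inter_subset_right : T ⊆ Finset.Icc 1 n)
  have sum_le : ∑ k ∈ T, (b (k - 1) - b k) ≤ b l - b m := by
    rw [← sum_sub_pred_Ioc b hlm]
    exact Finset.sum_le_sum_of_subset_of_nonneg Finset.inter_subset_left
      fun k _ _ => S.sub_pred_nonneg k
  have sum_nonneg : 0 ≤ ∑ k ∈ T, (b (k - 1) - b k) :=
    Finset.sum_nonneg fun k _ => S.sub_pred_nonneg k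
  refine (sum_rpow_le_card_rpow_mul_rpow_sum T (fun k _ => S.sub_pred_nonneg k) h0 h1).trans ?_
  have := sub_nonneg.2 h1
  gcongr

lemma hausdorffMeasure_Icc_inter_limitSet_le (S : BoundedDistortionIFS b g g' c α) (h0 : 0 < h)
    (h1 : h ≤ 1) (hcC : c ≤ C) (hK : 0 ≤ K)
    (hbound : HausdorffIntegralBound h (limitSet g n) C K) {l m : ℕ} (hlm : l ≤ m) :
    μH[h] (Icc (b m) (b l) ∩ limitSet g n) ≤
      ENNReal.ofReal (K * (n : ℝ) ^ (1 - h) * (b l - b m) ^ h) * μH[h] (limitSet g n) := by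
  set J := limitSet g n
  set T := Finset.Ioc l m ∩ Finset.Icc 1 n
  have : NullSingletonClass (μH[h] : Measure ℝ) := Measure.nullSingletonClass_hausdorff ℝ h0
  calc μH[h] (Icc (b m) (b l) ∩ J)
      ≤ μH[h] (⋃ k ∈ T, g k '' J) + μH[h] {b l, b m} :=
        (measure_mono (S.Icc_inter_limitSet_subset l m n)).trans (measure_union_le _ _)
    _ = μH[h] (⋃ k ∈ T, g k '' J) := by rw [(toFinite {b l, b m}).measure_zero, add_zero]
    _ ≤ ∑ k ∈ T, μH[h] (g k '' J) := measure_biUnion_finset_le _ _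
    _ ≤ ∑ k ∈ T, ENNReal.ofReal (K * (b (k - 1) - b k) ^ h) * μH[h] J :=
        Finset.sum_le_sum fun k hk => S.hausdorffMeasure_image_limitSet_le
          (Finset.mem_Icc.1 (Finset.mem_inter.1 hk).2).1 h0.le h1 hcC hK hbound
    _ = ENNReal.ofReal (K * ∑ k ∈ T, (b (k - 1) - b k) ^ h) * μH[h] J := by
        rw [← Finset.sum_mul, Finset.mul_sum, ENNReal.ofReal_sum_of_nonneg fun k _ =>
          mul_nonneg hK (Real.rpow_nonneg (S.sub_pred_nonneg k) h)]
    _ ≤ ENNReal.ofReal (K * (n : ℝ) ^ (1 - h) * (b l - b m) ^ h) * μH[h] J := by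
        rw [mul_assoc K]
        gcongr
        exact S.sum_sub_pred_rpow_le h0.le h1 hlm n

end BoundedDistortionIFS

end DensityBound

section Asymptotics

variable {h : ℕ → ℝ}

lemma tendsto_one_sub_of_mul_log (h1 : ∀ᶠ n in atTop, h n ≤ 1)
    (hlog : Tendsto (fun n : ℕ => (1 - h n) * Real.log n) atTop (𝓝 0)) :
    Tendsto (fun n => 1 - h n) atTop (𝓝 0) := by
  refine squeeze_zero' (h1.mono fun n hn => sub_nonneg.2 hn) ?_ hlog
  filter_upwards [h1, (Real.tendsto_log_atTop.comp
    tendsto_natCast_atTop_atTop).eventually_ge_atTop 1] with n hn one_le_log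
  exact le_mul_of_one_le_right (sub_nonneg.2 hn) one_le_log

lemma tendsto_natCast_rpow_one_sub
    (hlog : Tendsto (fun n : ℕ => (1 - h n) * Real.log n) atTop (𝓝 0)) :
    Tendsto (fun n : ℕ => (n : ℝ) ^ (1 - h n)) atTop (𝓝 1) := by
  have hexp := (Real.continuous_exp.tendsto 0).comp hlog
  rw [Real.exp_zero] at hexp
  refine hexp.congr' ?_
  filter_upwards [eventually_gt_atTop 0] with n hn
  rw [Real.rpow_def_of_pos (Nat.cast_pos.2 hn), mul_comm (Real.log n), Function.comp_apply]

lemma tendsto_transferError (c : ℝ) (h1 : ∀ᶠ n in atTop, h n ≤ 1)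
    (hlog : Tendsto (fun n : ℕ => (1 - h n) * Real.log n) atTop (𝓝 0)) :
    Tendsto (fun n => transferError c (h n) n) atTop (𝓝 0) := by
  have hpow := tendsto_natCast_rpow_one_sub hlog
  simpa [transferError] using ((hpow.sub_const 1).mul_const (Real.exp c)).add
    (hpow.mul (tendsto_one_sub_of_mul_log h1 hlog))

lemma le_one_of_dimH_eq_ofReal {J : Set ℝ} {h : ℝ} (hJ : dimH J = ENNReal.ofReal h) : h ≤ 1 := by
  rw [← ENNReal.ofReal_le_one, ← hJ, ← Real.dimH_univ]
  exact dimH_mono (subset_univ J)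

end Asymptotics

lemma BoundedDistortionIFS.exists_density_bound {b : ℕ → ℝ} {g g' : ℕ → ℝ → ℝ} {c α : ℝ≥0}
    (S : BoundedDistortionIFS b g g' c α) :
    ∃ A : ℝ, ∀ n, 1 ≤ n → ∀ h : ℝ, 0 < h → h ≤ 1 → ∀ l m, l ≤ m →
      μH[h] (Icc (b m) (b l) ∩ limitSet g n) / μH[h] (limitSet g n) /
        ENNReal.ofReal ((b l - b m) ^ h) ≤
          ENNReal.ofReal ((1 + A * transferError c h n) * (n : ℝ) ^ (1 - h)) := by
  have hα : 0 < 1 - (α : ℝ) := sub_pos.2 (by exact_mod_cast S.alpha_lt_one)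
  -- With these choices `c + C α = (1 - s) C`, as the cone contraction requires.
  set s := (1 - (α : ℝ)) / 2 with hs
  set C := c / s with hC
  have hs0 : 0 < s := by positivity
  have hs1 : s ≤ 1 := by linarith [α.coe_nonneg]
  have hC0 : 0 ≤ C := by positivity
  have hsC : c + C * α = (1 - s) * C := by
    have : c = s * C := by rw [hC]; field_simp
    rw [this, hs]
    ring
  have hcC : c ≤ C := by
    rw [hC, le_div_iff₀ hs0]
    exact mul_le_of_le_one_right c.coe_nonneg hs1
  refine ⟨Real.exp C / (s * Real.exp (-C)), fun n hn h h0 h1 l m hlm => ?_⟩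
  have hbound := S.hausdorffIntegralBound hn h0.le h1 hC0 hs0 hs1 hsC.le
  have herr := transferError_nonneg (c : ℝ) h1 hn
  have hmeas := S.hausdorffMeasure_Icc_inter_limitSet_le h0 h1 hcC (by positivity) hbound hlm
  refine ENNReal.div_le_of_le_mul (ENNReal.div_le_of_le_mul (hmeas.trans_eq ?_))
  rw [ENNReal.ofReal_mul (by positivity), mul_div_assoc, mul_comm (transferError c h n)]

theorem nonlinear_density_on_b_intervals_general {b : ℕ → ℝ} {g g' : ℕ → ℝ → ℝ} {c α : ℝ≥0}
    (S : BoundedDistortionIFS b g g' c α) {h : ℕ → ℝ}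
    (h_dim : ∀ n, 1 ≤ n → dimH (limitSet g n) = ENNReal.ofReal (h n))
    (N1 : Tendsto (fun n : ℕ => (1 - h n) * Real.log n) atTop (𝓝 0)) :
    limsup (fun n : ℕ => ⨆ (l : ℕ) (q : ℕ) (_ : 1 ≤ q),
      μH[h n] (Icc (b (l + q)) (b l) ∩ limitSet g n) / μH[h n] (limitSet g n) /
        ENNReal.ofReal ((b l - b (l + q)) ^ h n)) atTop ≤ 1 := by
  have h1 : ∀ᶠ n in atTop, h n ≤ 1 :=
    (eventually_ge_atTop 1).mono fun n hn => le_one_of_dimH_eq_ofReal (h_dim n hn)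
  have h0 : ∀ᶠ n in atTop, 0 < h n :=
    ((tendsto_one_sub_of_mul_log h1 N1).eventually_lt_const one_pos).mono fun n hn => by linarith
  obtain ⟨A, hA⟩ := S.exists_density_bound
  have bound_tendsto : Tendsto (fun n : ℕ => ENNReal.ofReal
      ((1 + A * transferError c (h n) n) * (n : ℝ) ^ (1 - h n))) atTop (𝓝 1) := by
    simpa using ENNReal.tendsto_ofReal ((((tendsto_transferError c h1 N1).const_mul A).const_add
      1).mul (tendsto_natCast_rpow_one_sub N1))
  refine (limsup_le_limsup ?_).trans_eq bound_tendsto.limsup_eq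
  filter_upwards [h0, h1, eventually_ge_atTop 1] with n hn0 hn1 hn
  exact iSup_le fun l => iSup₂_le fun q _ => hA n hn (h n) hn0 hn1 l (l + q) (Nat.le_add_right l q)

lemma NonlinearIFS.exists_boundedDistortionIFS (S : NonlinearIFS) :
    ∃ c α, BoundedDistortionIFS S.b S.g S.g' c α := by
  obtain ⟨c, hc0, hc⟩ := S.N3
  obtain ⟨α, hα1, hα⟩ := S.N5
  have hα0 : 0 ≤ α := (abs_nonneg _).trans (hα 1 le_rfl 0 (by simp)).le
  lift c to ℝ≥0 using hc0.le
  lift α to ℝ≥0 using hα0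
  exact ⟨c, α,
    { antitone := S.b_anti.antitone
      mem_unitInterval := fun k =>
        ⟨S.b_anti.antitone.le_of_tendsto S.b_lim k, S.b_zero ▸ S.b_anti.antitone k.zero_le⟩
      image_eq := S.g_image
      injOn := fun k hk => (S.g_anti k hk).injOn
      hasDerivWithinAt := fun k hk x hx => (S.deriv1 k hk x hx).hasDerivWithinAt
      logLipschitzOn := fun k hk => logLipschitzOn_abs_of_abs_logDeriv_le (convex_Icc 0 1)
        (fun x hx => (S.deriv2 k hk x hx).hasDerivWithinAt) (S.deriv_ne k hk)
        fun x hx => (hc k hk x hx).le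
      abs_deriv_le := fun k hk x hx => (hα k hk x hx).le
      alpha_lt_one := by exact_mod_cast hα1 }⟩

/-- In the nonlinear setting,
    `limsup_{n→∞} sup{ m_n([b_{l+q}, b_l])/(b_l - b_{l+q})^{h_n} : l ≥ 0, q ≥ 1 } ≤ 1`. -/
theorem nonlinear_density_on_b_intervals (S : NonlinearIFS) :
    Filter.limsup
      (fun n : ℕ => ⨆ (l : ℕ) (q : ℕ) (_ : 1 ≤ q),
        normMeas S n (Set.Icc (S.b (l + q)) (S.b l)) /
          ENNReal.ofReal ((S.b l - S.b (l + q)) ^ S.h n))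
      Filter.atTop ≤ 1 := by
  obtain ⟨c, α, hS⟩ := S.exists_boundedDistortionIFS
  exact nonlinear_density_on_b_intervals_general hS S.h_dim S.N1
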